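/- arXiv:2201.03854 — 3 statements merged into one kernel-verified Lean document; each statement's English description precedes it below -/
import Mathlib

section
/- For the family 𝔤₄(λ, z₂, w₁, w₂) with λ ≠ 0, the structure J is almost Kähler, i.e. dω(E,F,G) = 0 for all E, F, G ∈ 𝔤, if and only if z₂ w₁ = 2λ². -/
noncomputable section

/-- The bilinear antisymmetric bracket on ℝ⁴ determined by the structure constants. -/
def bk (lam z₂ w₁ w₂ : ℝ) (E F : Fin 4 → ℝ) : Fin 4 → ℝ :=
  (E 0 * F 1 - E 1 * F 0) • (![z₂, 0, 0, z₂ * w₁ / lam] : Fin 4 → ℝ) +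
  (E 0 * F 2 - E 2 * F 0) • (![-lam, 0, 0, -w₁] : Fin 4 → ℝ) +
  (E 0 * F 3 - E 3 * F 0) • (![0, 0, 0, 0] : Fin 4 → ℝ) +
  (E 1 * F 2 - E 2 * F 1) • (![0, -lam, -z₂, -w₂] : Fin 4 → ℝ) +
  (E 1 * F 3 - E 3 * F 1) • (![0, 0, 0, z₂] : Fin 4 → ℝ) +
  (E 2 * F 3 - E 3 * F 2) • (![0, 0, 0, -lam] : Fin 4 → ℝ)

/-- The almost Hermitian structure J with J(X)=Y, J(Y)=-X, J(Z)=W, J(W)=-Z. -/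
def Jm (E : Fin 4 → ℝ) : Fin 4 → ℝ := ![-E 1, E 0, -E 3, E 2]

/-- The standard inner product, making {X,Y,Z,W} orthonormal. -/
def ip (E F : Fin 4 → ℝ) : ℝ := E 0 * F 0 + E 1 * F 1 + E 2 * F 2 + E 3 * F 3

/-- The Kähler form ω(E,F) = ⟨JE, F⟩. -/
def om (E F : Fin 4 → ℝ) : ℝ := ip (Jm E) F

/-- The left-invariant exterior derivative of the Kähler form. -/
def dom (lam z₂ w₁ w₂ : ℝ) (E F G : Fin 4 → ℝ) : ℝ :=
  -om (bk lam z₂ w₁ w₂ E F) G - om (bk lam z₂ w₁ w₂ F G) E - om (bk lam z₂ w₁ w₂ G E) F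

theorem g4_almostKaehler_iff (lam z₂ w₁ w₂ : ℝ) (hlam : lam ≠ 0) :
    (∀ E F G : Fin 4 → ℝ, dom lam z₂ w₁ w₂ E F G = 0) ↔ z₂ * w₁ = 2 * lam ^ 2 := by
  have key : ∀ E F G : Fin 4 → ℝ, dom lam z₂ w₁ w₂ E F G =
      (z₂ * w₁ / lam - 2 * lam) *
        (E 0 * (F 1 * G 2 - F 2 * G 1) - E 1 * (F 0 * G 2 - F 2 * G 0)
          + E 2 * (F 0 * G 1 - F 1 * G 0)) := by
    intro E F G
    simp [dom, om, ip, Jm, bk]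
    ring
  have h2 : z₂ * w₁ = 2 * lam ^ 2 ↔ z₂ * w₁ / lam - 2 * lam = 0 := by
    rw [sub_eq_zero, div_eq_iff hlam, pow_two, mul_assoc 2 lam lam]
  rw [h2]
  constructor
  · intro h
    have h1 := h ![1, 0, 0, 0] ![0, 1, 0, 0] ![0, 0, 1, 0]
    rw [key] at h1
    simpa using h1
  · intro h E F G
    rw [key, h, zero_mul]

end
end

section
/- For the family 𝔤₄(λ, z₂, w₁, w₂) with λ ≠ 0, the structure J is integrable, i.e. the Nijenhuis tensor N(E,F) = 0 for all E, F ∈ 𝔤, if and only if 2z₂ + w₁ = 0 and w₂ = 0. -/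
noncomputable section

/-- The Nijenhuis tensor of J. -/
def NT (lam z₂ w₁ w₂ : ℝ) (E F : Fin 4 → ℝ) : Fin 4 → ℝ :=
  bk lam z₂ w₁ w₂ E F + Jm (bk lam z₂ w₁ w₂ (Jm E) F) + Jm (bk lam z₂ w₁ w₂ E (Jm F)) -
    bk lam z₂ w₁ w₂ (Jm E) (Jm F)

theorem g4_integrable_iff (lam z₂ w₁ w₂ : ℝ) (hlam : lam ≠ 0) :
    (∀ E F : Fin 4 → ℝ, NT lam z₂ w₁ w₂ E F = 0) ↔ (2 * z₂ + w₁ = 0 ∧ w₂ = 0) := by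
  constructor
  · intro h
    have h2 := congrFun (h ![1, 0, 0, 0] ![0, 0, 1, 0]) 2
    have h3 := congrFun (h ![1, 0, 0, 0] ![0, 0, 1, 0]) 3
    simp [NT, bk, Jm] at h2 h3
    constructor <;> linarith
  · rintro ⟨h1, rfl⟩ E F
    obtain rfl : w₁ = -2 * z₂ := by linarith
    ext i
    fin_cases i <;> simp [NT, bk, Jm] <;> ring

end
end

section
/- For the family 𝔤₄(λ, z₂, w₁, w₂) with λ ≠ 0, the structure J is never Kähler: it is impossible that simultaneously dω(E,F,G) = 0 for all E, F, G ∈ 𝔤 and N(E,F) = 0 for all E, F ∈ 𝔤. -/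
noncomputable section

theorem g4_never_kaehler (lam z₂ w₁ w₂ : ℝ) (hlam : lam ≠ 0) :
    ¬ ((∀ E F G : Fin 4 → ℝ, dom lam z₂ w₁ w₂ E F G = 0) ∧
      (∀ E F : Fin 4 → ℝ, NT lam z₂ w₁ w₂ E F = 0)) := by
  rintro ⟨h1, h2⟩
  have a := h1 ![1, 0, 0, 0] ![0, 1, 0, 0] ![0, 0, 1, 0]
  have b := congrFun (h2 ![1, 0, 0, 0] ![0, 0, 1, 0]) 3
  simp [dom, om, ip, Jm, bk] at a
  simp [NT, Jm, bk] at b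
  field_simp at a
  have hw : w₁ = -2 * z₂ := by linarith
  subst hw
  have hp : 0 < lam ^ 2 := by positivity
  nlinarith [sq_nonneg z₂]

end
end
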